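/- Let C be an abelian category and F an additive subfunctor of Ext^1. Suppose δ ∈ F(G, H) is the class of a short exact sequence 0 → H → I → G → 0, f: G' → G is an F-deflation, and the pullback class δ·f lies in F(G', H). Then (without further hypotheses this is automatic since F is a subfunctor) δ ∈ F(G,H). More substantively: if ε ∈ Ext^1(G,H) satisfies that ε·f ∈ F(G',H) for some F-deflation f: G' ↠ G, and F is closed, then ε ∈ F(G,H). -/

import Mathlib

open CategoryTheory CategoryTheory.Limits CategoryTheory.Abelian

universe w v u

variable {C : Type u} [Category.{v} C] [Abelian C] [HasExt.{w} C]

/-- An additive subfunctor of `Ext¹`, given by a set of extension classes in each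
`Ext Z A 1`, which is an additive subgroup stable under pushout (composition with
`Ext.mk₀ a` on the right) and pullback (composition with `Ext.mk₀ c` on the left). -/
structure IsAddSubfunctor (F : ∀ Z A : C, Set (Ext Z A 1)) : Prop where
  zero_mem : ∀ Z A : C, (0 : Ext Z A 1) ∈ F Z A
  add_mem : ∀ (Z A : C), ∀ δ₁ ∈ F Z A, ∀ δ₂ ∈ F Z A, δ₁ + δ₂ ∈ F Z A
  neg_mem : ∀ (Z A : C), ∀ δ ∈ F Z A, -δ ∈ F Z A
  push : ∀ (Z A A' : C) (a : A ⟶ A'), ∀ δ ∈ F Z A, δ.comp (Ext.mk₀ a) (add_zero 1) ∈ F Z A'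
  pull : ∀ (Z Z' A : C) (c : Z' ⟶ Z), ∀ δ ∈ F Z A, (Ext.mk₀ c).comp δ (zero_add 1) ∈ F Z' A

/-- `f` is an `F`-inflation if it is the mono of a short exact sequence whose
extension class lies in `F`. -/
def IsFInflation (F : ∀ Z A : C, Set (Ext Z A 1)) {A B : C} (f : A ⟶ B) : Prop :=
  ∃ (Z : C) (g : B ⟶ Z) (w : f ≫ g = 0) (hS : (ShortComplex.mk f g w).ShortExact),
    hS.extClass ∈ F Z A

/-- `g` is an `F`-deflation if it is the epi of a short exact sequence whose
extension class lies in `F`. -/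
def IsFDeflation (F : ∀ Z A : C, Set (Ext Z A 1)) {B Z : C} (g : B ⟶ Z) : Prop :=
  ∃ (A : C) (f : A ⟶ B) (w : f ≫ g = 0) (hS : (ShortComplex.mk f g w).ShortExact),
    hS.extClass ∈ F Z A

/-- The class of `F`-inflations is closed under composition. -/
def InflationsClosed (F : ∀ Z A : C, Set (Ext Z A 1)) : Prop :=
  ∀ ⦃A B D : C⦄ (f : A ⟶ B) (g : B ⟶ D),
    IsFInflation F f → IsFInflation F g → IsFInflation F (f ≫ g)

/-- The class of `F`-deflations is closed under composition. -/
def DeflationsClosed (F : ∀ Z A : C, Set (Ext Z A 1)) : Prop :=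
  ∀ ⦃E B Z : C⦄ (e : E ⟶ B) (g : B ⟶ Z),
    IsFDeflation F e → IsFDeflation F g → IsFDeflation F (e ≫ g)

/-!
The pullback `ε·f` dies along the deflation `q : P ⟶ G'` of a short exact sequence realizing it,
and `q` is an `F`-deflation because `ε·f` lies in `F`. Hence `ε` dies along the composite
`F`-deflation `q ≫ f`, and the long exact sequence of `Ext` exhibits it as a pushout of the class of
the short exact sequence defining `q ≫ f`, which lies in `F`.

That a class in `Ext¹(Z, A)` is realized by a short exact sequence is seen in the derived category,
where it is a morphism `Z ⟶ A⟦1⟧`: the middle term of a distinguished triangle on it lies in the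
heart of the canonical t-structure, and a distinguished triangle on objects of the heart is a short
exact sequence.
-/

section DistinguishedTriangles

open Triangulated Pretriangulated

variable {A D : Type*} [Category* A] [Category* D] [Preadditive D] [HasZeroObject D]
  [HasShift D ℤ] [∀ n : ℤ, (shiftFunctor D n).Additive] [Pretriangulated D]
  {ι : A ⥤ D} [ι.Full] [ι.Faithful]

theorem shortExact_of_map_distinguished [Preadditive A] [HasFiniteProducts A] [ι.Additive]
    (hι : ∀ ⦃X Y : A⦄ ⦃n : ℤ⦄ (f : ι.obj X ⟶ (ι.obj Y)⟦n⟧), n < 0 → f = 0)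
    {S : ShortComplex A} [S.HasHomology] {δ : ι.obj S.X₃ ⟶ (ι.obj S.X₁)⟦(1 : ℤ)⟧}
    (hT : Triangle.mk (ι.map S.f) (ι.map S.g) δ ∈ distTriang D) :
    S.ShortExact :=
  let isKernel := AbelianSubcategory.isLimitKernelForkOfDistTriang hι _ _ _ hT
  { exact := S.exact_of_f_is_kernel isKernel
    mono_f := mono_of_isLimit_fork isKernel
    epi_g := epi_of_isColimit_cofork
      (AbelianSubcategory.isColimitCokernelCoforkOfDistTriang hι _ _ _ hT) }

theorem mor₃_eq_of_map_distinguished {X₁ X₂ X₃ : A} {f : X₁ ⟶ X₂} {g : X₂ ⟶ X₃} [Epi g]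
    {δ δ' : ι.obj X₃ ⟶ (ι.obj X₁)⟦(1 : ℤ)⟧}
    (hT : Triangle.mk (ι.map f) (ι.map g) δ ∈ distTriang D)
    (hT' : Triangle.mk (ι.map f) (ι.map g) δ' ∈ distTriang D) :
    δ = δ' := by
  obtain ⟨c, hgc, hδ⟩ := complete_distinguished_triangle_morphism _ _ hT hT'
    (𝟙 (ι.obj X₁)) (𝟙 (ι.obj X₂)) (by simp [Triangle.mk])
  obtain ⟨c, rfl⟩ := ι.map_surjective c
  have hc : c = 𝟙 X₃ := by
    rw [← cancel_epi g]
    exact ι.map_injective (by simpa [Triangle.mk] using hgc)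
  simpa [Triangle.mk, hc] using hδ

end DistinguishedTriangles

section SingleFunctor

open DerivedCategory Pretriangulated

variable {A : Type*} [Category* A] [Abelian A] [HasDerivedCategory A]

theorem singleFunctor_hom_shift_eq_zero (n : ℤ) ⦃X Y : A⦄ ⦃k : ℤ⦄
    (f : (singleFunctor A n).obj X ⟶ ((singleFunctor A n).obj Y)⟦k⟧) (hk : k < 0) :
    f = 0 :=
  have := TStructure.t.isGE_shift ((singleFunctor A n).obj Y) n k (n - k)
  TStructure.t.zero f n (n - k)

theorem exists_singleFunctor_distinguished (n : ℤ) {X₁ X₃ : A}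
    (δ : (singleFunctor A n).obj X₃ ⟶ ((singleFunctor A n).obj X₁)⟦(1 : ℤ)⟧) :
    ∃ (X₂ : A) (f : X₁ ⟶ X₂) (g : X₂ ⟶ X₃),
      Triangle.mk ((singleFunctor A n).map f) ((singleFunctor A n).map g) δ ∈
        distTriang (DerivedCategory A) := by
  obtain ⟨Y, a, b, hT⟩ := distinguished_cocone_triangle₂ δ
  have : Y.IsLE n := TStructure.t.isLE₂ _ hT n
    (inferInstanceAs (((singleFunctor A n).obj X₁).IsLE n))
    (inferInstanceAs (((singleFunctor A n).obj X₃).IsLE n))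
  have : Y.IsGE n := TStructure.t.isGE₂ _ hT n
    (inferInstanceAs (((singleFunctor A n).obj X₁).IsGE n))
    (inferInstanceAs (((singleFunctor A n).obj X₃).IsGE n))
  obtain ⟨X₂, ⟨e⟩⟩ := exists_iso_singleFunctor_obj_of_isGE_of_isLE Y n
  obtain ⟨f, hf⟩ := (singleFunctor A n).map_surjective (a ≫ e.hom)
  obtain ⟨g, hg⟩ := (singleFunctor A n).map_surjective (e.inv ≫ b)
  refine ⟨X₂, f, g, isomorphic_distinguished _ hT _
    (Triangle.isoMk _ _ (Iso.refl ((singleFunctor A n).obj X₁)) e.symm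
      (Iso.refl ((singleFunctor A n).obj X₃)) ?_ ?_ ?_)⟩ <;> simp [Triangle.mk, hf, hg]

end SingleFunctor

open DerivedCategory Pretriangulated in
theorem exists_shortExact_extClass_eq {Z A : C} (ε : Ext Z A 1) :
    ∃ (E : C) (i : A ⟶ E) (p : E ⟶ Z) (w : i ≫ p = 0)
      (hS : (ShortComplex.mk i p w).ShortExact), hS.extClass = ε := by
  let := HasDerivedCategory.standard C
  obtain ⟨E, i, p, hT⟩ := exists_singleFunctor_distinguished 0 ε.hom
  have w : i ≫ p = 0 := by
    apply (singleFunctor C 0).map_injective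
    rw [Functor.map_comp, Functor.map_zero]
    exact comp_distTriang_mor_zero₁₂ _ hT
  have hS : (ShortComplex.mk i p w).ShortExact :=
    shortExact_of_map_distinguished (singleFunctor_hom_shift_eq_zero 0) hT
  have : Epi p := hS.epi_g
  refine ⟨E, i, p, w, hS, Ext.ext ?_⟩
  rw [hS.extClass_hom]
  exact mor₃_eq_of_map_distinguished hS.singleTriangle_distinguished hT

/-- Stability of a family of extension classes under pushout: the half of the functoriality in
`IsAddSubfunctor` that is covariant in the second argument. -/
def IsPushoutStable (F : ∀ Z A : C, Set (Ext Z A 1)) : Prop :=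
  ∀ (Z A A' : C) (a : A ⟶ A'), ∀ δ ∈ F Z A, δ.comp (Ext.mk₀ a) (add_zero 1) ∈ F Z A'

section Saturation

variable {F : ∀ Z A : C, Set (Ext Z A 1)}

theorem exists_isFDeflation_pullback_eq_zero {Z A : C} {ε : Ext Z A 1} (hε : ε ∈ F Z A) :
    ∃ (E : C) (p : E ⟶ Z), IsFDeflation F p ∧ (Ext.mk₀ p).comp ε (zero_add 1) = 0 := by
  obtain ⟨E, i, p, w, hS, rfl⟩ := exists_shortExact_extClass_eq ε
  exact ⟨E, p, ⟨A, i, w, hS, hε⟩, hS.comp_extClass⟩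

theorem IsPushoutStable.mem_of_pullback_eq_zero (hF : IsPushoutStable F) {B Z A : C}
    {g : B ⟶ Z} (hg : IsFDeflation F g) {ε : Ext Z A 1}
    (hε : (Ext.mk₀ g).comp ε (zero_add 1) = 0) :
    ε ∈ F Z A := by
  obtain ⟨K, k, w, hS, hK⟩ := hg
  obtain ⟨x, rfl⟩ := Ext.contravariant_sequence_exact₃ hS A ε hε (add_zero 1)
  obtain ⟨a, rfl⟩ := (Ext.mk₀_bijective K A).surjective x
  exact hF Z K A a _ hK

theorem closed_implies_saturated_general (hF : IsPushoutStable F) (hclosed : DeflationsClosed F)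
    {G' G H : C} {f : G' ⟶ G} (hf : IsFDeflation F f)
    {ε : Ext G H 1} (hε : (Ext.mk₀ f).comp ε (zero_add 1) ∈ F G' H) :
    ε ∈ F G H := by
  obtain ⟨P, q, hq, hqε⟩ := exists_isFDeflation_pullback_eq_zero hε
  have hqfε : (Ext.mk₀ (q ≫ f)).comp ε (zero_add 1) = 0 := by
    rwa [← Ext.mk₀_comp_mk₀_assoc]
  exact hF.mem_of_pullback_eq_zero (hclosed q f hq hf) hqfε

end Saturation

/-- Saturation: if `F` is closed (deflations compose) and `f : G' ⟶ G` is an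
`F`-deflation, then any `ε ∈ Ext¹(G,H)` whose pullback along `f` lies in `F`
already lies in `F`. -/
theorem closed_implies_saturated
    (F : ∀ Z A : C, Set (Ext Z A 1)) (hF : IsAddSubfunctor F)
    (hclosed : DeflationsClosed F)
    {G' G H : C} (f : G' ⟶ G) (hf : IsFDeflation F f)
    (ε : Ext G H 1) (hε : (Ext.mk₀ f).comp ε (zero_add 1) ∈ F G' H) :
    ε ∈ F G H :=
  closed_implies_saturated_general hF.push hclosed hf hε
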